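/- Let 𝒜 be an alphabet with δ = δ_𝒜 > 1/2 and A = max 𝒜. Then for every real x ≥ 4A² one has (1/(32A⁴))·x^{2δ} ≤ F_𝒜(x) − F_𝒜(x/(4A²)) ≤ F_𝒜(x) ≤ 8·x^{2δ}. -/

import Mathlib

open Real Filter

noncomputable section

/-- The continuant `⟨d₁,…,d_k⟩`, with `⟨⟩ = 1`, satisfying
`⟨d₁,…,d_k⟩ = d₁·⟨d₂,…,d_k⟩ + ⟨d₃,…,d_k⟩`. -/
def cont : List ℕ → ℕ
  | [] => 1
  | [d] => d
  | d :: e :: l => d * cont (e :: l) + cont l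

/-- The value of the finite continued fraction `[d₁,…,d_k] = ⟨d₂,…,d_k⟩ / ⟨d₁,…,d_k⟩`. -/
def cfVal (l : List ℕ) : ℝ := (cont l.tail : ℝ) / (cont l : ℝ)

/-- The set `E_𝒜` of values of infinite continued fractions `[0; d₁, d₂, …]`
with all partial quotients in `𝒜`. -/
def cfSet (A : Finset ℕ) : Set ℝ :=
  {x | ∃ d : ℕ → ℕ, (∀ i, d i ∈ A) ∧
    Tendsto (fun k => cfVal ((List.range k).map d)) atTop (nhds x)}

/-- `δ_𝒜`, the Hausdorff dimension of `E_𝒜` (as a real number). -/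
def hdim (A : Finset ℕ) : ℝ := (dimH (cfSet A)).toReal

/-- `F_𝒜(x)`: the number of finite sequences with entries in `𝒜` whose continuant
is at most `x`. -/
def FF (A : Finset ℕ) (x : ℝ) : ℕ :=
  Set.ncard {l : List ℕ | l ≠ [] ∧ (∀ d ∈ l, d ∈ A) ∧ (cont l : ℝ) ≤ x}

/-! ### Basic continuant machinery -/

def ND : List ℕ → ℝ → ℝ × ℝ
  | [], t => (t, 1)
  | a :: l, t => ((ND l t).2, a * (ND l t).2 + (ND l t).1)

def phi : List ℕ → ℝ → ℝ
  | [], t => t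
  | a :: l, t => 1 / (a + phi l t)

def Pos (l : List ℕ) : Prop := ∀ d ∈ l, 0 < d

theorem Pos.tail {a : ℕ} {l : List ℕ} (h : Pos (a :: l)) : Pos l :=
  fun d hd => h d (List.mem_cons_of_mem _ hd)

theorem Pos.head {a : ℕ} {l : List ℕ} (h : Pos (a :: l)) : (1 : ℝ) ≤ a := by
  have := h a (List.mem_cons_self)
  exact_mod_cast this

def qq (l : List ℕ) : ℝ := (ND l 0).2
def ss (l : List ℕ) : ℝ := (ND l 1).2

theorem cont_eq (l : List ℕ) : (cont l : ℝ) = qq l := by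
  unfold qq
  induction l using cont.induct with
  | case1 => simp [cont, ND]
  | case2 d => simp [cont, ND]
  | case3 d e l ih1 ih2 => 
    simp only [cont, ND] at *
    push_cast
    rw [ih1, ih2]

theorem phi_mem {l : List ℕ} (h : Pos l) {t : ℝ} (h0 : 0 ≤ t) (h1 : t ≤ 1) :
    0 ≤ phi l t ∧ phi l t ≤ 1 := by
  induction l with
  | nil => exact ⟨h0, h1⟩
  | cons a l ih =>
    have ⟨i0, i1⟩ := ih h.tail
    have ha := h.head
    simp only [phi]
    refine ⟨by positivity, ?_⟩
    rw [div_le_one (by linarith)]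
    linarith

theorem ND_pos {l : List ℕ} (h : Pos l) {t : ℝ} (h0 : 0 ≤ t) :
    0 ≤ (ND l t).1 ∧ 1 ≤ (ND l t).2 := by
  induction l with
  | nil => simpa [ND] using h0
  | cons a l ih =>
    have ⟨i0, i1⟩ := ih h.tail
    have ha := h.head
    simp only [ND]
    refine ⟨by linarith, ?_⟩
    nlinarith

theorem ND_mono {l : List ℕ} (h : Pos l) {t u : ℝ} (htu : t ≤ u) :
    (ND l t).1 ≤ (ND l u).1 ∧ (ND l t).2 ≤ (ND l u).2 := by
  induction l with
  | nil => simpa [ND] using htu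
  | cons a l ih =>
    have ⟨i0, i1⟩ := ih h.tail
    have ha := h.head
    simp only [ND]
    refine ⟨by linarith, ?_⟩
    nlinarith

theorem ND_phi {l : List ℕ} (h : Pos l) {t : ℝ} (h0 : 0 ≤ t) (h1 : t ≤ 1) :
    (ND l t).1 = phi l t * (ND l t).2 := by
  induction l with
  | nil => simp [ND, phi]
  | cons a l ih =>
    have := ih h.tail
    have ha := h.head
    have hp := phi_mem h.tail h0 h1
    simp only [ND, phi]
    rw [this]
    field_simp [show (a : ℝ) + phi l t ≠ 0 by linarith]

theorem phi_diff {l : List ℕ} (h : Pos l) {t u : ℝ} (h0 : 0 ≤ t) (h1 : t ≤ 1)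
    (k0 : 0 ≤ u) (k1 : u ≤ 1) :
    |phi l t - phi l u| * ((ND l t).2 * (ND l u).2) = |t - u| := by
  induction l with
  | nil => simp [ND, phi]
  | cons a l ih =>
    have := ih h.tail
    have ha := h.head
    have hp := phi_mem h.tail h0 h1
    have hq := phi_mem h.tail k0 k1
    simp only [ND, phi]
    rw [ND_phi h.tail h0 h1, ND_phi h.tail k0 k1, ← this]
    have e1 : (0 : ℝ) < a + phi l t := by linarith
    have e2 : (0 : ℝ) < a + phi l u := by linarith
    have : 1 / (a + phi l t) - 1 / (a + phi l u) =
      -((phi l t - phi l u) / ((a + phi l t) * (a + phi l u))) := by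
      field_simp; ring
    rw [this, abs_neg, abs_div, abs_of_pos (mul_pos e1 e2)]
    field_simp

theorem phi_upper {l : List ℕ} (h : Pos l) {t u : ℝ} (h0 : 0 ≤ t) (h1 : t ≤ 1)
    (k0 : 0 ≤ u) (k1 : u ≤ 1) :
    |phi l t - phi l u| ≤ |t - u| / (qq l) ^ 2 := by
  have hq := (ND_pos h le_rfl).2
  have e1 := (ND_mono h h0).2
  have e2 := (ND_mono h k0).2
  rw [← phi_diff h h0 h1 k0 k1, le_div_iff₀ (by unfold qq; positivity), sq]
  unfold qq
  gcongr
  linarith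

theorem phi_lower {l : List ℕ} (h : Pos l) {t u : ℝ} (h0 : 0 ≤ t) (h1 : t ≤ 1)
    (k0 : 0 ≤ u) (k1 : u ≤ 1) :
    |t - u| / (ss l) ^ 2 ≤ |phi l t - phi l u| := by
  have hq := (ND_pos h (zero_le_one)).2
  have e1 := (ND_mono h h1).2
  have e2 := (ND_mono h k1).2
  have e3 := (ND_pos h h0).2
  have e4 := (ND_pos h k0).2
  rw [← phi_diff h h0 h1 k0 k1, div_le_iff₀ (by unfold ss; positivity), sq]
  unfold ss
  gcongr

theorem ND_append (w u : List ℕ) (t : ℝ) :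
    (ND (w ++ u) t).1 = (ND w 0).1 * (ND u t).2 + ((ND w 1).1 - (ND w 0).1) * (ND u t).1 ∧
    (ND (w ++ u) t).2 = (ND w 0).2 * (ND u t).2 + ((ND w 1).2 - (ND w 0).2) * (ND u t).1 := by
  induction w with
  | nil => simp [ND]
  | cons a w ih =>
    simp only [List.cons_append, ND]
    rw [ih.1, ih.2]
    constructor <;> ring

theorem phi_append (w u : List ℕ) (t : ℝ) : phi (w ++ u) t = phi w (phi u t) := by
  induction w with
  | nil => simp [phi]
  | cons a w ih => simp [phi, ih]

theorem qq_one {l : List ℕ} (h : Pos l) : 1 ≤ qq l := (ND_pos h le_rfl).2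

theorem qq_le_ss {l : List ℕ} (h : Pos l) : qq l ≤ ss l := (ND_mono h zero_le_one).2

theorem ss_le {l : List ℕ} (h : Pos l) : ss l ≤ 2 * qq l := by
  unfold ss qq
  induction l using cont.induct with
  | case1 => simp [ND]
  | case2 d =>
    have := h.head
    simp [ND]; linarith
  | case3 d e l ih1 ih2 =>
    have := h.head
    have i1 := ih1 h.tail
    have i2 := ih2 h.tail.tail
    simp only [ND] at *
    nlinarith

theorem len_le {l : List ℕ} (h : Pos l) : ((l.length : ℝ) + 1) / 2 ≤ qq l := by
  unfold qq
  induction l using cont.induct with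
  | case1 => simp [ND]; norm_num
  | case2 d =>
    have := h.head
    simp [ND]; exact_mod_cast this
  | case3 d e l ih1 ih2 =>
    have := h.head
    have i1 := ih1 h.tail
    have i2 := (ND_pos h.tail.tail le_rfl).2
    have i3 := (ND_pos h.tail le_rfl).2
    simp only [ND, List.length_cons] at *
    push_cast at *
    nlinarith

theorem ss_two {l : List ℕ} (h : Pos l) (hl : l ≠ []) : 2 ≤ ss l := by
  cases l with
  | nil => exact absurd rfl hl
  | cons a l =>
    unfold ss
    have ha := h.head
    have i := (ND_pos h.tail zero_le_one).2
    have j : 1 ≤ (ND l 1).1 := by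
      cases l with
      | nil => simp [ND]
      | cons b l => simpa [ND] using (ND_pos h.tail.tail zero_le_one).2
    simp only [ND]
    nlinarith

theorem Pos.append {w u : List ℕ} (h : Pos w) (h' : Pos u) : Pos (w ++ u) := by
  intro d hd
  rcases List.mem_append.1 hd with h1 | h1
  · exact h d h1
  · exact h' d h1

theorem ss_le_qq_append {w u : List ℕ} (h : Pos w) (h' : Pos u) (hu : u ≠ []) :
    ss w ≤ qq (w ++ u) := by
  cases u with
  | nil => exact absurd rfl hu
  | cons a l =>
    have e := (ND_append w (a :: l) 0).2
    have i1 := (ND_pos h' le_rfl).2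
    have i2 := (ND_pos h'.tail le_rfl).2
    have i3 := (ND_mono h zero_le_one).2
    have i4 := (ND_pos h le_rfl).2
    unfold qq ss
    rw [e]
    have i5 : 1 ≤ (ND (a :: l) 0).1 := by simpa [ND] using i2
    nlinarith

theorem two_ss_le {w u : List ℕ} (h : Pos w) (h' : Pos u) (hu : 2 ≤ u.length) :
    2 * ss w ≤ ss (w ++ u) := by
  match u, h', hu with
  | a :: b :: l, h', _ =>
    have e := (ND_append w (a :: b :: l) 1).2
    have i1 := ss_two h' (by simp)
    have i2 := ss_two h'.tail (by simp)
    have i3 := (ND_mono h zero_le_one).2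
    have i4 := (ND_pos h le_rfl).2
    unfold ss at *
    rw [e]
    have i5 : (ND (a :: b :: l) 1).1 = (ND (b :: l) 1).2 := by simp [ND]
    rw [i5]
    nlinarith

theorem qq_snoc {w : List ℕ} (h : Pos w) (a : ℕ) : qq (w ++ [a]) ≤ (a + 1) * qq w := by
  have e := (ND_append w [a] 0).2
  have := ss_le h
  unfold qq ss at *
  rw [e]
  simp [ND]
  linarith

/-! ### Infinite continued fractions -/

def pre (d : ℕ → ℕ) (n : ℕ) : List ℕ := (List.range n).map d

theorem pre_succ (d : ℕ → ℕ) (n : ℕ) : pre d (n + 1) = d 0 :: pre (fun k => d (k + 1)) n := by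
  simp [pre, List.range_succ_eq_map, Function.comp_def]

theorem pre_snoc (d : ℕ → ℕ) (n : ℕ) : pre d (n + 1) = pre d n ++ [d n] := by
  simp [pre, List.range_succ]

theorem pre_add (d : ℕ → ℕ) (n m : ℕ) : pre d (n + m) = pre d n ++ pre (fun k => d (k + n)) m := by
  induction m with
  | zero => simp [pre]
  | succ m ih => rw [← add_assoc, pre_snoc, ih, pre_snoc, List.append_assoc, add_comm n m]

theorem pre_pos {d : ℕ → ℕ} (h : ∀ i, 0 < d i) (n : ℕ) : Pos (pre d n) := by
  intro a ha
  simp only [pre, List.mem_map] at ha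
  obtain ⟨i, _, rfl⟩ := ha
  exact h i

def val (d : ℕ → ℕ) : ℝ := limUnder atTop (fun n => phi (pre d n) 0)

theorem val_tendsto {d : ℕ → ℕ} (h : ∀ i, 0 < d i) :
    Tendsto (fun n => phi (pre d n) 0) atTop (nhds (val d)) := by
  apply CauchySeq.tendsto_limUnder
  refine cauchySeq_of_le_tendsto_0' (fun n : ℕ => 2 / ((n : ℝ) + 1)) ?_ ?_
  · intro n m hnm
    obtain ⟨k, rfl⟩ := Nat.exists_eq_add_of_le hnm
    rw [pre_add, phi_append, Real.dist_eq]
    have hp := phi_mem (pre_pos (d := fun k => d (k + n)) (fun i => h _) k) le_rfl zero_le_one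
    refine (phi_upper (pre_pos h n) le_rfl zero_le_one hp.1 hp.2).trans ?_
    have hl := len_le (pre_pos h n)
    have hl' : (pre d n).length = n := by simp [pre]
    rw [hl'] at hl
    have h1 := qq_one (pre_pos h n)
    have : |0 - phi (pre (fun k => d (k + n)) k) 0| ≤ 1 := by
      rw [abs_le]; constructor <;> linarith
    rw [div_le_div_iff₀ (by positivity) (by positivity)]
    have hn : (0 : ℝ) ≤ n := n.cast_nonneg
    nlinarith [mul_le_mul_of_nonneg_right this (show (0 : ℝ) ≤ n + 1 by positivity)]
  · have := (tendsto_one_div_add_atTop_nhds_zero_nat (𝕜 := ℝ)).const_mul 2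
    simpa [div_eq_mul_inv] using this

theorem val_mem {d : ℕ → ℕ} (h : ∀ i, 0 < d i) : 0 ≤ val d ∧ val d ≤ 1 := by
  have := val_tendsto h
  exact ⟨ge_of_tendsto' this (fun n => (phi_mem (pre_pos h n) le_rfl zero_le_one).1),
    le_of_tendsto' this (fun n => (phi_mem (pre_pos h n) le_rfl zero_le_one).2)⟩

theorem val_step {d : ℕ → ℕ} (h : ∀ i, 0 < d i) :
    val d = 1 / (d 0 + val (fun k => d (k + 1))) := by
  have h1 := (tendsto_add_atTop_iff_nat 1).2 (val_tendsto h)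
  have h2 := val_tendsto (d := fun k => d (k + 1)) (fun i => h _)
  have h3 := val_mem (d := fun k => d (k + 1)) (fun i => h _)
  have h4 : (1 : ℝ) ≤ d 0 := by exact_mod_cast h 0
  refine tendsto_nhds_unique h1 ?_
  simp only [pre_succ, phi]
  exact tendsto_const_nhds.div (h2.const_add _) (by linarith)

theorem val_shift {d : ℕ → ℕ} (h : ∀ i, 0 < d i) (n : ℕ) :
    val d = phi (pre d n) (val (fun k => d (k + n))) := by
  induction n generalizing d with
  | zero => simp [pre, phi]
  | succ n ih =>
    rw [val_step h, pre_succ, phi, ih (d := fun k => d (k + 1)) (fun i => h _)]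
    simp only [add_assoc]

theorem cfVal_eq {l : List ℕ} (h : Pos l) (hl : l ≠ []) : cfVal l = phi l 0 := by
  cases l with
  | nil => exact absurd rfl hl
  | cons a l =>
    unfold cfVal
    have := ND_phi h le_rfl zero_le_one
    have i := (ND_pos h le_rfl).2
    rw [cont_eq, cont_eq, List.tail_cons, div_eq_iff (by have := qq_one h; linarith)]
    unfold qq
    rw [← this]
    simp [ND]

theorem mem_cfSet {A : Finset ℕ} (hpos : ∀ a ∈ A, 0 < a) {x : ℝ} :
    x ∈ cfSet A ↔ ∃ d : ℕ → ℕ, (∀ i, d i ∈ A) ∧ x = val d := by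
  have key : ∀ d : ℕ → ℕ, (∀ i, d i ∈ A) →
      Tendsto (fun k => cfVal ((List.range k).map d)) atTop (nhds (val d)) := by
    intro d hd
    have hp : ∀ i, 0 < d i := fun i => hpos _ (hd i)
    refine (val_tendsto hp).congr' ?_
    filter_upwards [eventually_ge_atTop 1] with n hn
    rw [← cfVal_eq (pre_pos hp n)]
    · rfl
    · intro h0
      have := congrArg List.length h0
      simp [pre] at this
      omega
  constructor
  · rintro ⟨d, hd, ht⟩
    exact ⟨d, hd, tendsto_nhds_unique ht (key d hd)⟩
  · rintro ⟨d, hd, rfl⟩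
    exact ⟨d, hd, key d hd⟩

/-! ### Covers: lower bound -/

theorem exists_cover {A : Finset ℕ} (hpos : ∀ a ∈ A, 0 < a) (W : Finset (List ℕ))
    (hW : ∀ w ∈ W, Pos w) (hcov : ∀ d : ℕ → ℕ, (∀ i, d i ∈ A) → ∃ n, pre d n ∈ W)
    {s r : ℝ} (hr : r = ∑ w ∈ W, ((qq w ^ 2)⁻¹) ^ s) (n : ℕ) :
    ∃ (ι : Type) (_ : Fintype ι) (t : ι → Set ℝ) (ρ : ι → ℝ),
      (∀ i, t i ⊆ Set.Icc 0 1) ∧ cfSet A ⊆ ⋃ i, t i ∧ (∀ i, 0 ≤ ρ i) ∧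
      (∀ i, ∀ x ∈ t i, ∀ y ∈ t i, |x - y| ≤ ρ i) ∧ ∑ i, ρ i ^ s ≤ r ^ n := by
  induction n with
  | zero =>
    refine ⟨Unit, inferInstance, fun _ => Set.Icc 0 1, fun _ => 1, fun _ => subset_rfl, ?_,
      by simp, ?_, by simp⟩
    · intro x hx
      obtain ⟨d, hd, rfl⟩ := (mem_cfSet hpos).1 hx
      have := val_mem (d := d) (fun i => hpos _ (hd i))
      simpa using this
    · rintro _ x ⟨hx, hx'⟩ y ⟨hy, hy'⟩
      rw [abs_le]; constructor <;> linarith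
  | succ n ih =>
    obtain ⟨ι, hι, t, ρ, h1, h2, h3, h4, h5⟩ := ih
    refine ⟨W × ι, inferInstance, fun p => phi p.1.1 '' t p.2,
      fun p => (qq p.1.1 ^ 2)⁻¹ * ρ p.2, ?_, ?_, ?_, ?_, ?_⟩
    · rintro ⟨⟨w, hw⟩, i⟩ _ ⟨x, hx, rfl⟩
      exact phi_mem (hW w hw) (h1 i hx).1 (h1 i hx).2
    · intro x hx
      obtain ⟨d, hd, rfl⟩ := (mem_cfSet hpos).1 hx
      have hd' := fun i => hpos _ (hd i)
      obtain ⟨k, hk⟩ := hcov d hd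
      have hy : val (fun j => d (j + k)) ∈ cfSet A :=
        (mem_cfSet hpos).2 ⟨_, fun i => hd _, rfl⟩
      obtain ⟨i, hi⟩ := Set.mem_iUnion.1 (h2 hy)
      refine Set.mem_iUnion.2 ⟨⟨⟨pre d k, hk⟩, i⟩, _, hi, ?_⟩
      exact (val_shift hd' k).symm
    · rintro ⟨⟨w, hw⟩, i⟩
      exact mul_nonneg (by positivity) (h3 i)
    · rintro ⟨⟨w, hw⟩, i⟩ _ ⟨x, hx, rfl⟩ _ ⟨y, hy, rfl⟩
      refine (phi_upper (hW w hw) (h1 i hx).1 (h1 i hx).2 (h1 i hy).1 (h1 i hy).2).trans ?_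
      rw [div_eq_inv_mul]
      exact mul_le_mul_of_nonneg_left (h4 i x hx y hy) (by positivity)
    · rw [Fintype.sum_prod_type]
      have : ∀ (w : W) (i : ι), ((qq w.1 ^ 2)⁻¹ * ρ i) ^ s = ((qq w.1 ^ 2)⁻¹) ^ s * ρ i ^ s :=
        fun w i => Real.mul_rpow (by positivity) (h3 i)
      simp only [this, ← Finset.mul_sum, ← Finset.sum_mul]
      rw [pow_succ', Finset.sum_coe_sort W (fun w => ((qq w ^ 2)⁻¹) ^ s), ← hr]
      refine mul_le_mul_of_nonneg_left h5 ?_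
      rw [hr]
      exact Finset.sum_nonneg (fun w _ => by positivity)

theorem dimH_le_of_cover {A : Finset ℕ} (hpos : ∀ a ∈ A, 0 < a) (W : Finset (List ℕ))
    (hW : ∀ w ∈ W, Pos w) (hcov : ∀ d : ℕ → ℕ, (∀ i, d i ∈ A) → ∃ n, pre d n ∈ W)
    {s : ℝ} (hs : 0 < s) (hr : ∑ w ∈ W, ((qq w ^ 2)⁻¹) ^ s < 1) :
    dimH (cfSet A) ≤ ENNReal.ofReal s := by
  set r := ∑ w ∈ W, ((qq w ^ 2)⁻¹) ^ s with hrr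
  have hr0 : 0 ≤ r := Finset.sum_nonneg (fun w _ => by positivity)
  choose ι hι t ρ h1 h2 h3 h4 h5 using exists_cover hpos W hW hcov hrr
  have hlim : Tendsto (fun n : ℕ => r ^ n) atTop (nhds 0) :=
    tendsto_pow_atTop_nhds_zero_of_lt_one hr0 hr
  have hlim2 : Tendsto (fun n : ℕ => ENNReal.ofReal ((r ^ n) ^ s⁻¹)) atTop (nhds 0) := by
    have : Tendsto (fun n : ℕ => (r ^ n) ^ s⁻¹) atTop (nhds (0 ^ s⁻¹)) :=
      hlim.rpow_const (Or.inr (by positivity))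
    rw [Real.zero_rpow (by positivity)] at this
    simpa [Function.comp_def] using (ENNReal.continuous_ofReal.tendsto 0).comp this
  have hd : ∀ n i, Metric.ediam (t n i) ≤ ENNReal.ofReal (ρ n i) := by
    intro n i
    refine Metric.ediam_le (fun x hx y hy => ?_)
    rw [edist_dist, Real.dist_eq]
    exact ENNReal.ofReal_le_ofReal (h4 n i x hx y hy)
  have hb := MeasureTheory.Measure.hausdorffMeasure_le_liminf_sum (ι := ι) s (cfSet A)
    (l := atTop) _ hlim2 t
    (Eventually.of_forall (fun n i => (hd n i).trans (ENNReal.ofReal_le_ofReal (by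
      have : ρ n i ^ s ≤ r ^ n := le_trans
        (Finset.single_le_sum (f := fun i => ρ n i ^ s)
          (fun j _ => Real.rpow_nonneg (h3 n j) s) (Finset.mem_univ i)) (h5 n)
      calc ρ n i = (ρ n i ^ s) ^ s⁻¹ := by
            rw [← Real.rpow_mul (h3 n i), mul_inv_cancel₀ hs.ne', Real.rpow_one]
        _ ≤ _ := Real.rpow_le_rpow (Real.rpow_nonneg (h3 n i) s) this (by positivity)))))
    (Eventually.of_forall h2)
  have hz : Tendsto (fun n => ∑ i, Metric.ediam (t n i) ^ s) atTop (nhds 0) := by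
    have hl : Tendsto (fun n : ℕ => ENNReal.ofReal (r ^ n)) atTop (nhds 0) := by
      simpa [Function.comp_def] using (ENNReal.continuous_ofReal.tendsto 0).comp hlim
    refine tendsto_of_tendsto_of_tendsto_of_le_of_le tendsto_const_nhds hl
      (fun n => zero_le) (fun n => ?_)
    calc ∑ i, Metric.ediam (t n i) ^ s ≤ ∑ i, ENNReal.ofReal (ρ n i ^ s) := by
          refine Finset.sum_le_sum (fun i _ => ?_)
          rw [← ENNReal.ofReal_rpow_of_nonneg (h3 n i) hs.le]
          exact ENNReal.rpow_le_rpow (hd n i) hs.le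
      _ = ENNReal.ofReal (∑ i, ρ n i ^ s) :=
          (ENNReal.ofReal_sum_of_nonneg (fun i _ => Real.rpow_nonneg (h3 n i) s)).symm
      _ ≤ _ := ENNReal.ofReal_le_ofReal (h5 n)
  rw [hz.liminf_eq] at hb
  rw [ENNReal.ofReal]
  apply dimH_le_of_hausdorffMeasure_ne_top
  rw [Real.coe_toNNReal s hs.le]
  exact ne_top_of_le_ne_top (by simp) hb

theorem hdim_le_one (A : Finset ℕ) : hdim A ≤ 1 := by
  have : dimH (cfSet A) ≤ 1 := (dimH_mono (Set.subset_univ _)).trans_eq Real.dimH_univ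
  exact ENNReal.toReal_le_of_le_ofReal zero_le_one (by simpa using this)

theorem lower_sum {A : Finset ℕ} (hpos : ∀ a ∈ A, 0 < a) (W : Finset (List ℕ))
    (hW : ∀ w ∈ W, Pos w) (hcov : ∀ d : ℕ → ℕ, (∀ i, d i ∈ A) → ∃ n, pre d n ∈ W)
    (hδ : 0 < hdim A) : 1 ≤ ∑ w ∈ W, ((qq w ^ 2)⁻¹) ^ hdim A := by
  by_contra hlt
  push Not at hlt
  have hc : Continuous (fun s : ℝ => ∑ w ∈ W, ((qq w ^ 2)⁻¹) ^ s) := by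
    refine continuous_finsetSum _ (fun w hw => ?_)
    have := qq_one (hW w hw)
    exact Real.continuous_const_rpow (by positivity)
  have he : ∀ᶠ s in nhdsWithin (hdim A) (Set.Iio (hdim A)),
      ∑ w ∈ W, ((qq w ^ 2)⁻¹) ^ s < 1 :=
    (hc.tendsto _).mono_left nhdsWithin_le_nhds (Iio_mem_nhds hlt)
  have hp : ∀ᶠ s in nhdsWithin (hdim A) (Set.Iio (hdim A)), 0 < s :=
    nhdsWithin_le_nhds (Ioi_mem_nhds hδ)
  obtain ⟨s, ⟨h1, h2⟩, h3⟩ := ((he.and hp).and self_mem_nhdsWithin).exists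
  have := ENNReal.toReal_le_of_le_ofReal h2.le (dimH_le_of_cover hpos W hW hcov h2 h1)
  exact absurd h3 (not_lt.2 this)

/-! ### Mass distribution: upper bound -/

theorem greedy {α : Type*} [DecidableEq α] (W : Finset α) (p : α → ℝ) (hp : ∀ w ∈ W, 0 < p w) :
    ∃ c : α → ℝ, ∀ y : ℝ, 0 ≤ y → y < ∑ w ∈ W, p w → ∃ w ∈ W, c w ≤ y ∧ y < c w + p w := by
  induction W using Finset.induction_on with
  | empty => exact ⟨fun _ => 0, fun y h0 h1 => by simp at h1; linarith⟩
  | insert a s ha ih =>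
    obtain ⟨c, hc⟩ := ih (fun w hw => hp w (Finset.mem_insert_of_mem hw))
    refine ⟨Function.update c a (∑ w ∈ s, p w), fun y h0 h1 => ?_⟩
    rw [Finset.sum_insert ha] at h1
    by_cases hy : y < ∑ w ∈ s, p w
    · obtain ⟨w, hw, h⟩ := hc y h0 hy
      have : w ≠ a := fun e => ha (e ▸ hw)
      exact ⟨w, Finset.mem_insert_of_mem hw, by simpa [Function.update_of_ne this] using h⟩
    · exact ⟨a, Finset.mem_insert_self _ _, by simp; constructor <;> linarith⟩

section machine
variable {Y : Type} (wd : Y → List ℕ) (T : Y → Y)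

def mnorm : List ℕ × Y → List ℕ × Y
  | ([], y) => (wd y, T y)
  | (a :: l, y) => (a :: l, y)

def memit (σ : List ℕ × Y) : ℕ := (mnorm wd T σ).1.headD 0
def mstep (σ : List ℕ × Y) : List ℕ × Y := ((mnorm wd T σ).1.tail, (mnorm wd T σ).2)
def mdig (σ : List ℕ × Y) (n : ℕ) : ℕ := memit wd T ((mstep wd T)^[n] σ)

end machine

theorem machine {A : Finset ℕ} (hpos : ∀ a ∈ A, 0 < a) {Y : Type} (wd : Y → List ℕ) (T : Y → Y)
    (h1 : ∀ y, wd y ≠ []) (h2 : ∀ y, ∀ d ∈ wd y, d ∈ A) :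
    ∃ g : Y → ℝ, (∀ y, g y ∈ cfSet A) ∧ ∀ y, g y = phi (wd y) (g (T y)) := by
  have hn : ∀ σ : List ℕ × Y, (∀ d ∈ σ.1, d ∈ A) → (mnorm wd T σ).1 ≠ [] ∧
      ∀ d ∈ (mnorm wd T σ).1, d ∈ A := by
    rintro ⟨l, y⟩ h
    cases l with
    | nil => exact ⟨h1 y, h2 y⟩
    | cons a l => exact ⟨by simp [mnorm], h⟩
  have he : ∀ σ : List ℕ × Y, (∀ d ∈ σ.1, d ∈ A) → memit wd T σ ∈ A := by
    intro σ h
    obtain ⟨k1, k2⟩ := hn σ h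
    unfold memit
    cases hl : (mnorm wd T σ).1 with
    | nil => exact absurd hl k1
    | cons a l => exact k2 a (by rw [hl]; simp)
  have hs : ∀ σ : List ℕ × Y, (∀ d ∈ σ.1, d ∈ A) → ∀ d ∈ (mstep wd T σ).1, d ∈ A := by
    intro σ h d hd
    exact (hn σ h).2 d (List.mem_of_mem_tail hd)
  have hit : ∀ n, ∀ σ : List ℕ × Y, (∀ d ∈ σ.1, d ∈ A) →
      ∀ d ∈ ((mstep wd T)^[n] σ).1, d ∈ A := by
    intro n
    induction n with
    | zero => intro σ h; exact h
    | succ n ih => intro σ h; rw [Function.iterate_succ_apply]; exact ih _ (hs σ h)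
  have hdig : ∀ σ : List ℕ × Y, (∀ d ∈ σ.1, d ∈ A) → ∀ n, mdig wd T σ n ∈ A :=
    fun σ h n => he _ (hit n σ h)
  have hG : ∀ σ : List ℕ × Y, (∀ d ∈ σ.1, d ∈ A) → val (mdig wd T σ) =
      1 / (memit wd T σ + val (mdig wd T (mstep wd T σ))) := by
    intro σ h
    rw [val_step (fun i => hpos _ (hdig σ h i))]
    rfl
  have hL : ∀ (l : List ℕ) (y : Y), (∀ d ∈ l, d ∈ A) →
      val (mdig wd T (l, y)) = phi l (val (mdig wd T ([], y))) := by
    intro l y h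
    induction l with
    | nil => rfl
    | cons a l ih =>
      rw [hG (a :: l, y) h, phi, ← ih (fun d hd => h d (List.mem_cons_of_mem _ hd))]
      rfl
  refine ⟨fun y => val (mdig wd T ([], y)), fun y => ?_, fun y => ?_⟩
  · exact (mem_cfSet hpos).2 ⟨_, hdig _ (by simp), rfl⟩
  · simp only
    rw [← hL _ _ (h2 y), hG ([], y) (by simp), hG (wd y, T y) (h2 y)]
    have : mnorm wd T (wd y, T y) = mnorm wd T ([], y) := by
      cases hl : wd y with
      | nil => exact absurd hl (h1 y)
      | cons a l => simp [mnorm, hl]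
    simp only [memit, mstep, this]

theorem inv_mem {M a : ℕ} (h1 : 1 ≤ a) (h2 : a ≤ M) {t : ℝ} (h0 : 0 ≤ t) (ht : t ≤ 1) :
    1 / ((M : ℝ) + 1) ≤ 1 / (a + t) ∧ 1 / (a + t) ≤ 1 := by
  have h1' : (1 : ℝ) ≤ a := by exact_mod_cast h1
  have h2' : (a : ℝ) ≤ M := by exact_mod_cast h2
  constructor
  · apply one_div_le_one_div_of_le <;> linarith
  · rw [div_le_one (by linarith)]; linarith

theorem phi_mem' {M : ℕ} {l : List ℕ} (h : ∀ d ∈ l, 1 ≤ d ∧ d ≤ M) {t : ℝ}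
    (h0 : 1 / ((M : ℝ) + 1) ≤ t) (h1 : t ≤ 1) :
    1 / ((M : ℝ) + 1) ≤ phi l t ∧ phi l t ≤ 1 := by
  induction l with
  | nil => exact ⟨h0, h1⟩
  | cons a l ih =>
    have ⟨i0, i1⟩ := ih (fun d hd => h d (List.mem_cons_of_mem _ hd))
    have ha := h a List.mem_cons_self
    exact inv_mem ha.1 ha.2 (le_trans (by positivity) i0) i1

theorem separation {M : ℕ} (w v : List ℕ) (hw : ∀ d ∈ w, 1 ≤ d ∧ d ≤ M)
    (hv : ∀ d ∈ v, 1 ≤ d ∧ d ≤ M) (h1 : ¬ w <+: v) (h2 : ¬ v <+: w) {t u : ℝ}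
    (ht : 1 / ((M : ℝ) + 1) ≤ t) (ht' : t ≤ 1) (hu : 1 / ((M : ℝ) + 1) ≤ u) (hu' : u ≤ 1) :
    (1 / ((M : ℝ) + 1)) ^ (3 + 2 * w.length) ≤ |phi w t - phi v u| := by
  induction w generalizing v with
  | nil => exact absurd (List.nil_prefix) h1
  | cons a w ih =>
    cases v with
    | nil => exact absurd (List.nil_prefix) h2
    | cons b v =>
      have hw' := fun d hd => hw d (List.mem_cons_of_mem _ hd)
      have hv' := fun d hd => hv d (List.mem_cons_of_mem _ hd)
      have ⟨x0, x1⟩ := phi_mem' hw' ht ht'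
      have ⟨y0, y1⟩ := phi_mem' hv' hu hu'
      obtain ⟨a1, a2⟩ := hw a List.mem_cons_self
      obtain ⟨b1, b2⟩ := hv b List.mem_cons_self
      have a1' : (1 : ℝ) ≤ a := by exact_mod_cast a1
      have b1' : (1 : ℝ) ≤ b := by exact_mod_cast b1
      have a2' : (a : ℝ) ≤ M := by exact_mod_cast a2
      have b2' : (b : ℝ) ≤ M := by exact_mod_cast b2
      set e := 1 / ((M : ℝ) + 1) with he
      have hM : (0 : ℝ) < M + 1 := by positivity
      have e0 : 0 < e := by positivity
      have e1 : e ≤ 1 := by rw [he, div_le_one hM]; linarith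
      simp only [phi]
      set X := phi w t
      set Z := phi v u
      have hX : 0 < a + X := by linarith
      have hZ : 0 < b + Z := by linarith
      have hd : 1 / (a + X) - 1 / (b + Z) = ((b + Z) - (a + X)) * ((1 / (a + X)) * (1 / (b + Z))) := by
        field_simp
      have i1 : e ≤ 1 / (a + X) := one_div_le_one_div_of_le hX (by linarith)
      have i2 : e ≤ 1 / (b + Z) := one_div_le_one_div_of_le hZ (by linarith)
      have i3 : e * e ≤ (1 / (a + X)) * (1 / (b + Z)) := by gcongr
      rw [hd, abs_mul, abs_of_pos (a := (1 / (a + X)) * (1 / (b + Z))) (by positivity)]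
      by_cases hab : a = b
      · subst hab
        have := ih v hw' hv' (fun h => h1 (by simpa using h)) (fun h => h2 (by simpa using h))
        have e2 : |(a : ℝ) + Z - (a + X)| = |X - Z| := by
          rw [abs_sub_comm]; congr 1; ring
        rw [e2]
        calc e ^ (3 + 2 * (a :: w).length) = e ^ (3 + 2 * w.length) * (e * e) := by
              rw [List.length_cons]; ring
          _ ≤ _ := by gcongr
      · have key : e ≤ |(b : ℝ) + Z - (a + X)| := by
          rcases lt_or_gt_of_ne hab with h | h
          · have : (a : ℝ) + 1 ≤ b := by exact_mod_cast h
            exact le_trans (by linarith) (le_abs_self _)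
          · have : (b : ℝ) + 1 ≤ a := by exact_mod_cast h
            exact le_trans (by linarith) (neg_le_abs _)
        calc e ^ (3 + 2 * (a :: w).length) ≤ e ^ 3 :=
              pow_le_pow_of_le_one e0.le e1 (by omega)
          _ = e * (e * e) := by ring
          _ ≤ _ := by gcongr

theorem dimH_ge {A : Finset ℕ} {M : ℕ} (hA : ∀ a ∈ A, 0 < a ∧ a ≤ M) (W : Finset (List ℕ))
    (hW : ∀ w ∈ W, w ≠ [] ∧ ∀ d ∈ w, d ∈ A)
    (hpf : ∀ w ∈ W, ∀ v ∈ W, w ≠ v → ¬ w <+: v)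
    {t : ℝ} (ht : 0 < t) (hsum : 1 ≤ ∑ w ∈ W, ((ss w ^ 2)⁻¹) ^ t) :
    ENNReal.ofReal t ≤ dimH (cfSet A) := by
  have hpos : ∀ a ∈ A, 0 < a := fun a ha => (hA a ha).1
  have hWp : ∀ w ∈ W, Pos w := fun w hw d hd => hpos d ((hW w hw).2 d hd)
  have hWM : ∀ w ∈ W, ∀ d ∈ w, 1 ≤ d ∧ d ≤ M := fun w hw d hd => hA d ((hW w hw).2 d hd)
  set R := ∑ w ∈ W, ((ss w ^ 2)⁻¹) ^ t with hR
  have hR0 : 0 < R := by linarith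
  let p : List ℕ → ℝ := fun w => ((ss w ^ 2)⁻¹) ^ t / R
  have hss : ∀ w ∈ W, 2 ≤ ss w := fun w hw => ss_two (hWp w hw) (hW w hw).1
  have hp0 : ∀ w ∈ W, 0 < p w := fun w hw => by
    have := hss w hw
    positivity
  have hple : ∀ w ∈ W, p w ≤ ((ss w ^ 2)⁻¹) ^ t := fun w hw =>
    div_le_self (by positivity) hsum
  have hpsum : ∑ w ∈ W, p w = 1 := by
    simp only [p]
    rw [← Finset.sum_div]
    exact div_self hR0.ne'
  set ρ : ℝ := (1 / 4 : ℝ) ^ t with hρ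
  have hρ1 : ρ < 1 := Real.rpow_lt_one (by norm_num) (by norm_num) ht
  have hρ0 : 0 ≤ ρ := by positivity
  have hpρ : ∀ w ∈ W, p w ≤ ρ := fun w hw => (hple w hw).trans (by
    have := hss w hw
    refine Real.rpow_le_rpow (by positivity) ?_ ht.le
    rw [one_div]
    apply inv_anti₀ (by norm_num)
    nlinarith)
  obtain ⟨c, hc⟩ := greedy W p hp0
  rw [hpsum] at hc
  let Y := Set.Ico (0 : ℝ) 1
  have hc' : ∀ y : Y, ∃ w ∈ W, c w ≤ y.1 ∧ y.1 < c w + p w := fun y => hc y.1 y.2.1 y.2.2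
  choose wd hwW hw1 hw2 using hc'
  let T : Y → Y := fun y => ⟨(y.1 - c (wd y)) / p (wd y), by
    have h := hp0 _ (hwW y)
    have h1 := hw1 y
    have h2 := hw2 y
    constructor
    · exact div_nonneg (by linarith) h.le
    · rw [div_lt_one h]; linarith⟩
  obtain ⟨g, hgE, hg⟩ := machine hpos wd T (fun y => (hW _ (hwW y)).1) (fun y => (hW _ (hwW y)).2)
  have hgI : ∀ y, 1 / ((M : ℝ) + 1) ≤ g y ∧ g y ≤ 1 := by
    intro y
    obtain ⟨d, hd, he⟩ := (mem_cfSet hpos).1 (hgE y)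
    have hd' := fun i => hpos _ (hd i)
    have := val_mem (d := fun k => d (k + 1)) (fun i => hd' _)
    rw [he, val_step hd']
    exact inv_mem (hd' 0) (hA _ (hd 0)).2 this.1 this.2
  have hM : (0 : ℝ) < M + 1 := by positivity
  set e := 1 / ((M : ℝ) + 1) with he
  have e0 : 0 < e := by positivity
  have e1 : e ≤ 1 := by rw [he, div_le_one hM]; linarith [M.cast_nonneg (α := ℝ)]
  set κ : ℝ := e ^ (3 + 2 * W.sup List.length) with hκ
  have hκ0 : 0 < κ := by positivity
  set C : ℝ := (κ⁻¹) ^ t with hC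
  have hC0 : 0 < C := by positivity
  have hsep : ∀ x y, wd x ≠ wd y → κ ≤ |g x - g y| := by
    intro x y hxy
    rw [hg x, hg y]
    refine le_trans ?_ (separation (wd x) (wd y) (hWM _ (hwW x)) (hWM _ (hwW y))
      (hpf _ (hwW x) _ (hwW y) hxy) (hpf _ (hwW y) _ (hwW x) hxy.symm)
      (hgI _).1 (hgI _).2 (hgI _).1 (hgI _).2)
    refine pow_le_pow_of_le_one e0.le e1 ?_
    have : (wd x).length ≤ W.sup List.length := Finset.le_sup (f := List.length) (hwW x)
    omega
  have hind : ∀ n : ℕ, ∀ x y : Y, |x.1 - y.1| ≤ C * |g x - g y| ^ t + ρ ^ n := by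
    intro n
    induction n with
    | zero =>
      intro x y
      have : |x.1 - y.1| ≤ 1 := by
        have := x.2.1; have := x.2.2; have := y.2.1; have := y.2.2
        rw [abs_le]; constructor <;> linarith
      have h2 : 0 ≤ C * |g x - g y| ^ t := by positivity
      simp; linarith
    | succ n ih =>
      intro x y
      by_cases hxy : wd x = wd y
      · have hpw := hp0 _ (hwW y)
        have h1 : |x.1 - y.1| = p (wd y) * |(T x).1 - (T y).1| := by
          simp only [T, hxy]
          rw [← sub_div, abs_div, abs_of_pos hpw]
          field_simp
          congr 1; ring
        have h2 := ih (T x) (T y)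
        have h3 : p (wd y) * |g (T x) - g (T y)| ^ t ≤ |g x - g y| ^ t := by
          have i := phi_lower (hWp _ (hwW y)) (e0.le.trans (hgI (T x)).1) (hgI (T x)).2
            (e0.le.trans (hgI (T y)).1) (hgI (T y)).2
          have hs := hss _ (hwW y)
          rw [hg x, hg y, hxy]
          calc p (wd y) * |g (T x) - g (T y)| ^ t
              ≤ ((ss (wd y) ^ 2)⁻¹) ^ t * |g (T x) - g (T y)| ^ t := by
                gcongr; exact hple _ (hwW y)
            _ = (|g (T x) - g (T y)| / ss (wd y) ^ 2) ^ t := by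
                rw [← Real.mul_rpow (by positivity) (by positivity), div_eq_inv_mul]
            _ ≤ _ := Real.rpow_le_rpow (by positivity) i ht.le
        rw [h1]
        calc p (wd y) * |(T x).1 - (T y).1|
            ≤ p (wd y) * (C * |g (T x) - g (T y)| ^ t + ρ ^ n) := by gcongr
          _ = C * (p (wd y) * |g (T x) - g (T y)| ^ t) + p (wd y) * ρ ^ n := by ring
          _ ≤ C * |g x - g y| ^ t + ρ * ρ ^ n := by
              gcongr; exact hpρ _ (hwW y)
          _ = _ := by ring
      · have h1 : |x.1 - y.1| ≤ 1 := by
          have := x.2.1; have := x.2.2; have := y.2.1; have := y.2.2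
          rw [abs_le]; constructor <;> linarith
        have h2 : 1 ≤ C * |g x - g y| ^ t := by
          rw [hC, ← Real.mul_rpow (by positivity) (by positivity)]
          apply Real.one_le_rpow _ ht.le
          rw [inv_mul_eq_div, one_le_div hκ0]
          exact hsep x y hxy
        have : 0 ≤ ρ ^ (n + 1) := by positivity
        linarith
  have hfin : ∀ x y : Y, |x.1 - y.1| ≤ C * |g x - g y| ^ t := by
    intro x y
    have hl : Tendsto (fun n : ℕ => C * |g x - g y| ^ t + ρ ^ n) atTop
        (nhds (C * |g x - g y| ^ t + 0)) :=
      (tendsto_pow_atTop_nhds_zero_of_lt_one hρ0 hρ1).const_add _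
    rw [add_zero] at hl
    exact ge_of_tendsto' hl (fun n => hind n x y)
  have hinj : Function.Injective g := by
    intro x y hxy
    have := hfin x y
    rw [hxy, sub_self, abs_zero, Real.zero_rpow ht.ne', mul_zero] at this
    exact Subtype.ext (sub_eq_zero.1 (abs_nonpos_iff.1 this))
  have y0 : Y := ⟨0, by simp [Y]⟩
  have : Nonempty Y := ⟨y0⟩
  let f : ℝ → ℝ := fun z => (Function.invFun g z).1
  have hfg : ∀ y, f (g y) = y.1 := fun y => by
    simp only [f, Function.leftInverse_invFun hinj y]
  have hH : HolderOnWith C.toNNReal t.toNNReal f (Set.range g) := by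
    rintro _ ⟨x, rfl⟩ _ ⟨y, rfl⟩
    rw [hfg, hfg, edist_dist, edist_dist, Real.dist_eq, Real.dist_eq, Real.coe_toNNReal t ht.le,
      ENNReal.ofReal_rpow_of_nonneg (abs_nonneg _) ht.le]
    change _ ≤ ENNReal.ofReal C * _
    rw [← ENNReal.ofReal_mul hC0.le]
    exact ENNReal.ofReal_le_ofReal (hfin x y)
  have hdim := hH.dimH_image_le (by simpa using ht)
  have him : f '' Set.range g = Set.Ico 0 1 := by
    ext z
    constructor
    · rintro ⟨_, ⟨y, rfl⟩, rfl⟩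
      rw [hfg]; exact y.2
    · intro hz
      exact ⟨_, ⟨⟨z, hz⟩, rfl⟩, hfg _⟩
  rw [him, Real.dimH_of_nonempty_interior (by simp [interior_Ico]), Module.finrank_self,
    Nat.cast_one] at hdim
  have h1 : (t.toNNReal : ENNReal) ≤ dimH (Set.range g) := by
    have h0 : (t.toNNReal : ENNReal) ≠ 0 := by simpa using ht
    rwa [ENNReal.le_div_iff_mul_le (Or.inl h0) (Or.inl (by simp)), one_mul] at hdim
  refine h1.trans (dimH_mono ?_)
  rintro _ ⟨y, rfl⟩
  exact hgE y

theorem upper_sum {A : Finset ℕ} {M : ℕ} (hA : ∀ a ∈ A, 0 < a ∧ a ≤ M) (W : Finset (List ℕ))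
    (hW : ∀ w ∈ W, w ≠ [] ∧ ∀ d ∈ w, d ∈ A)
    (hpf : ∀ w ∈ W, ∀ v ∈ W, w ≠ v → ¬ w <+: v)
    (hδ : 0 < hdim A) : ∑ w ∈ W, ((ss w ^ 2)⁻¹) ^ hdim A ≤ 1 := by
  by_contra hlt
  push Not at hlt
  have hWp : ∀ w ∈ W, Pos w := fun w hw d hd => (hA d ((hW w hw).2 d hd)).1
  have hc : Continuous (fun s : ℝ => ∑ w ∈ W, ((ss w ^ 2)⁻¹) ^ s) := by
    refine continuous_finsetSum _ (fun w hw => ?_)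
    have := qq_one (hWp w hw)
    have := qq_le_ss (hWp w hw)
    exact Real.continuous_const_rpow (by have : 0 < ss w := by linarith
                                         positivity)
  have he : ∀ᶠ s in nhdsWithin (hdim A) (Set.Ioi (hdim A)),
      1 < ∑ w ∈ W, ((ss w ^ 2)⁻¹) ^ s :=
    (hc.tendsto _).mono_left nhdsWithin_le_nhds (Ioi_mem_nhds hlt)
  obtain ⟨s, h1, h3⟩ := (he.and self_mem_nhdsWithin).exists
  have h3' : hdim A < s := h3
  have hs : 0 < s := hδ.trans h3'
  have := dimH_ge hA W hW hpf hs h1.le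
  have h4 := (ENNReal.ofReal_le_iff_le_toReal (Real.dimH_ne_top (cfSet A))).1 this
  exact absurd h3' (not_lt.2 h4)

/-! ### Counting -/

theorem inv_sq_rpow {z : ℝ} (hz : 0 < z) (δ : ℝ) : ((z ^ 2)⁻¹) ^ δ = (z ^ (2 * δ))⁻¹ := by
  rw [Real.inv_rpow (by positivity), Real.rpow_mul hz.le]
  norm_num

theorem antichain_card {A : Finset ℕ} {M : ℕ} (hA : ∀ a ∈ A, 0 < a ∧ a ≤ M) (W : Finset (List ℕ))
    (hW : ∀ w ∈ W, w ≠ [] ∧ ∀ d ∈ w, d ∈ A)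
    (hpf : ∀ w ∈ W, ∀ v ∈ W, w ≠ v → ¬ w <+: v)
    (hδ : 0 < hdim A) {y : ℝ} (hy : 0 < y) (hWy : ∀ w ∈ W, ss w ≤ y) :
    (W.card : ℝ) ≤ y ^ (2 * hdim A) := by
  have h := upper_sum hA W hW hpf hδ
  have h2 : (W.card : ℝ) * (y ^ (2 * hdim A))⁻¹ ≤ ∑ w ∈ W, ((ss w ^ 2)⁻¹) ^ hdim A := by
    rw [← nsmul_eq_mul]
    refine Finset.card_nsmul_le_sum _ _ _ (fun w hw => ?_)
    have hp : Pos w := fun d hd => (hA d ((hW w hw).2 d hd)).1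
    have h0 : 0 < ss w := by linarith [ss_two hp (hW w hw).1]
    rw [inv_sq_rpow h0]
    apply inv_anti₀ (by positivity)
    exact Real.rpow_le_rpow h0.le (hWy w hw) (by positivity)
  have h3 : 0 < y ^ (2 * hdim A) := by positivity
  have := h2.trans h
  rwa [← div_eq_mul_inv, div_le_one h3] at this

theorem count_ss {A : Finset ℕ} {M : ℕ} (hA : ∀ a ∈ A, 0 < a ∧ a ≤ M) (B : Finset (List ℕ))
    (hB : ∀ w ∈ B, w ≠ [] ∧ ∀ d ∈ w, d ∈ A) (hδ : 1 / 2 < hdim A) (n : ℕ) :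
    ∀ y : ℝ, 0 < y → y < 2 ^ n →
      ((B.filter (fun w => ss w ≤ y)).card : ℝ) ≤ 4 * y ^ (2 * hdim A) := by
  have hBp : ∀ w ∈ B, Pos w := fun w hw d hd => (hA d ((hB w hw).2 d hd)).1
  induction n with
  | zero =>
    intro y hy hy1
    have : B.filter (fun w => ss w ≤ y) = ∅ := by
      apply Finset.filter_eq_empty_iff.2
      intro w hw
      have := ss_two (hBp w hw) (hB w hw).1
      norm_num at hy1
      linarith
    rw [this]
    simp; positivity
  | succ n ih =>
    intro y hy hy1
    have h1 := ih (y / 2) (by positivity) (by rw [pow_succ] at hy1; linarith)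
    have layer : ∀ j : ℕ, (((B.filter (fun w => (y / 2 < ss w ∧ ss w ≤ y) ∧
        w.length % 2 = j)).card : ℕ) : ℝ) ≤ y ^ (2 * hdim A) := by
      intro j
      apply antichain_card hA _ _ _ (by linarith) hy
      · intro w hw
        exact (Finset.mem_filter.1 hw).2.1.2
      · intro w hw
        exact hB w (Finset.mem_filter.1 hw).1
      · rintro w hw v hv hne ⟨u, rfl⟩
        obtain ⟨hw1, ⟨hw2, hw3⟩, hw4⟩ := Finset.mem_filter.1 hw
        obtain ⟨hv1, ⟨hv2, hv3⟩, hv4⟩ := Finset.mem_filter.1 hv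
        have hu : u ≠ [] := by rintro rfl; simp at hne
        have hu' := List.length_pos_iff.2 hu
        rw [List.length_append] at hv4
        have hup : Pos u := fun d hd => hBp _ hv1 d (List.mem_append_right _ hd)
        have := two_ss_le (hBp w hw1) hup (by omega)
        linarith
    have hsub : B.filter (fun w => ss w ≤ y) ⊆ B.filter (fun w => ss w ≤ y / 2) ∪
        (B.filter (fun w => (y / 2 < ss w ∧ ss w ≤ y) ∧ w.length % 2 = 0) ∪
        B.filter (fun w => (y / 2 < ss w ∧ ss w ≤ y) ∧ w.length % 2 = 1)) := by
      intro w hw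
      obtain ⟨hw1, hw2⟩ := Finset.mem_filter.1 hw
      simp only [Finset.mem_union, Finset.mem_filter]
      by_cases h : ss w ≤ y / 2
      · exact Or.inl ⟨hw1, h⟩
      · right
        rcases Nat.mod_two_eq_zero_or_one w.length with h' | h'
        · exact Or.inl ⟨hw1, ⟨not_le.1 h, hw2⟩, h'⟩
        · exact Or.inr ⟨hw1, ⟨not_le.1 h, hw2⟩, h'⟩
    have hcard := (Finset.card_le_card hsub).trans ((Finset.card_union_le _ _).trans
      (Nat.add_le_add_left (Finset.card_union_le _ _) _))
    have hcard' : ((B.filter (fun w => ss w ≤ y)).card : ℝ) ≤ _ := Nat.cast_le.2 hcard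
    push_cast at hcard'
    have l0 := layer 0
    have l1 := layer 1
    have hhalf : (y / 2) ^ (2 * hdim A) ≤ y ^ (2 * hdim A) / 2 := by
      rw [Real.div_rpow hy.le (by norm_num)]
      apply div_le_div_of_nonneg_left (by positivity) (by norm_num)
      calc (2 : ℝ) = 2 ^ (1 : ℝ) := by norm_num
        _ ≤ _ := Real.rpow_le_rpow_of_exponent_le (by norm_num) (by linarith)
    linarith

theorem fin_words {A : Finset ℕ} (hpos : ∀ a ∈ A, 0 < a) (x : ℝ) :
    {l : List ℕ | l ≠ [] ∧ (∀ d ∈ l, d ∈ A) ∧ (cont l : ℝ) ≤ x}.Finite := by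
  obtain ⟨N, hN⟩ := exists_nat_ge (2 * x)
  refine ((List.finite_length_le A N).image (List.map Subtype.val)).subset ?_
  rintro l ⟨_, h1, h2⟩
  have hp : Pos l := fun d hd => hpos d (h1 d hd)
  refine ⟨l.attach.map (fun d => ⟨d.1, h1 d.1 d.2⟩), ?_, ?_⟩
  · simp only [Set.mem_ofPred_eq, List.length_map, List.length_attach]
    have := len_le hp
    rw [cont_eq] at h2
    have : (l.length : ℝ) ≤ N := by linarith
    exact_mod_cast this
  · simp [List.map_map, Function.comp_def]

theorem hensley_bounds
    (A : Finset ℕ) (hpos : ∀ a ∈ A, 0 < a) (hcard : 2 ≤ A.card)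
    (Amax : ℕ) (hmem : Amax ∈ A) (hub : ∀ a ∈ A, a ≤ Amax)
    (hδ : 1/2 < hdim A)
    (x : ℝ) (hx : 4 * (Amax : ℝ)^2 ≤ x) :
    (1 / (32 * (Amax : ℝ)^4)) * x ^ (2 * hdim A) ≤
        (FF A x : ℝ) - (FF A (x / (4 * (Amax : ℝ)^2)) : ℝ) ∧
    (FF A x : ℝ) - (FF A (x / (4 * (Amax : ℝ)^2)) : ℝ) ≤ (FF A x : ℝ) ∧
    (FF A x : ℝ) ≤ 8 * x ^ (2 * hdim A) := by
  have hA : ∀ a ∈ A, 0 < a ∧ a ≤ Amax := fun a ha => ⟨hpos a ha, hub a ha⟩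
  have hM : (1 : ℝ) ≤ Amax := by exact_mod_cast hpos _ hmem
  have hδ1 := hdim_le_one A
  have hδ0 : 0 < hdim A := by linarith
  set M : ℝ := (Amax : ℝ) with hMdef
  have hx4 : 4 ≤ x := by nlinarith
  have hx0 : 0 < x := by linarith
  set B := (fin_words hpos x).toFinset with hBdef
  have hFB : (FF A x) = B.card := by
    unfold FF
    rw [Set.ncard_eq_toFinset_card _ (fin_words hpos x)]
  have hBmem : ∀ w, w ∈ B ↔ w ≠ [] ∧ (∀ d ∈ w, d ∈ A) ∧ qq w ≤ x := by
    intro w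
    rw [hBdef, Set.Finite.mem_toFinset, Set.mem_ofPred_eq, cont_eq]
  have hBp : ∀ w ∈ B, Pos w := fun w hw d hd => hpos d (((hBmem w).1 hw).2.1 d hd)
  refine ⟨?_, ?_, ?_⟩
  · set x' := x / (4 * M ^ 2) with hx'
    set B' := (fin_words hpos x').toFinset with hBdef'
    have hFB' : (FF A x') = B'.card := by
      unfold FF
      rw [Set.ncard_eq_toFinset_card _ (fin_words hpos x')]
    have hBmem' : ∀ w, w ∈ B' ↔ w ≠ [] ∧ (∀ d ∈ w, d ∈ A) ∧ qq w ≤ x' := by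
      intro w
      rw [hBdef', Set.Finite.mem_toFinset, Set.mem_ofPred_eq, cont_eq]
    have hxx : x' ≤ x / (M + 1) := by
      apply div_le_div_of_nonneg_left hx0.le (by linarith)
      nlinarith
    have hxx2 : x / (M + 1) ≤ x := div_le_self hx0.le (by linarith)
    set W := B.filter (fun w => x / (M + 1) < qq w) with hWdef
    have hdisj : Disjoint B' W := by
      rw [Finset.disjoint_left]
      intro w h1 h2
      have := ((hBmem' w).1 h1).2.2
      have := (Finset.mem_filter.1 h2).2
      linarith
    have hsub : B' ∪ W ⊆ B := by
      intro w hw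
      rcases Finset.mem_union.1 hw with h | h
      · obtain ⟨h1, h2, h3⟩ := (hBmem' w).1 h
        exact (hBmem w).2 ⟨h1, h2, by linarith⟩
      · exact (Finset.mem_filter.1 h).1
    have hc := Finset.card_le_card hsub
    rw [Finset.card_union_of_disjoint hdisj] at hc
    have hc' : (B'.card : ℝ) + W.card ≤ B.card := by exact_mod_cast hc
    have hcov : ∀ d : ℕ → ℕ, (∀ i, d i ∈ A) → ∃ n, pre d n ∈ W := by
      intro d hd
      have hd' := fun i => hpos _ (hd i)
      have hex : ∃ n, x < qq (pre d (n + 1)) := by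
        obtain ⟨N, hN⟩ := exists_nat_ge (2 * x)
        refine ⟨N, ?_⟩
        have := len_le (pre_pos hd' (N + 1))
        have hl : (pre d (N + 1)).length = N + 1 := by simp [pre]
        rw [hl] at this
        push_cast at this
        linarith
      classical
      set n := Nat.find hex with hn
      have h1 : x < qq (pre d (n + 1)) := Nat.find_spec hex
      have hn0 : n ≠ 0 := by
        intro h0
        rw [h0] at h1
        have e : qq (pre d (0 + 1)) = d 0 := by simp [pre, qq, ND]
        rw [e] at h1
        have : (d 0 : ℝ) ≤ M := Nat.cast_le.2 (hub _ (hd 0))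
        nlinarith
      obtain ⟨m, hm⟩ := Nat.exists_eq_succ_of_ne_zero hn0
      have h2 : qq (pre d n) ≤ x := by
        have := Nat.find_min hex (m := m) (by omega)
        rw [hm]
        exact not_lt.1 this
      refine ⟨n, Finset.mem_filter.2 ⟨(hBmem _).2 ⟨?_, ?_, h2⟩, ?_⟩⟩
      · intro h0
        have := congrArg List.length h0
        simp [pre] at this
        exact hn0 this
      · intro a ha
        simp only [pre, List.mem_map] at ha
        obtain ⟨i, _, rfl⟩ := ha
        exact hd i
      · rw [div_lt_iff₀ (by linarith)]
        rw [pre_snoc] at h1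
        have h3 := qq_snoc (pre_pos hd' n) (d n)
        have h4 := qq_one (pre_pos hd' n)
        have : (d n : ℝ) ≤ M := Nat.cast_le.2 (hub _ (hd n))
        nlinarith
    have hlow := lower_sum hpos W (fun w hw => hBp w (Finset.mem_filter.1 hw).1) hcov hδ0
    have hz : 0 < x / (M + 1) := by positivity
    have hup : ∑ w ∈ W, ((qq w ^ 2)⁻¹) ^ hdim A ≤
        W.card * ((x / (M + 1)) ^ (2 * hdim A))⁻¹ := by
      rw [← nsmul_eq_mul]
      refine Finset.sum_le_card_nsmul _ _ _ (fun w hw => ?_)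
      have h1 := (Finset.mem_filter.1 hw).2
      rw [inv_sq_rpow (hz.trans h1)]
      apply inv_anti₀ (by positivity)
      exact Real.rpow_le_rpow hz.le h1.le (by positivity)
    have h5 : (x / (M + 1)) ^ (2 * hdim A) ≤ W.card := by
      have h6 : 0 < (x / (M + 1)) ^ (2 * hdim A) := by positivity
      have := hlow.trans hup
      rwa [← div_eq_mul_inv, one_le_div h6] at this
    rw [hFB, hFB']
    have h7 : (M + 1) ^ (2 * hdim A) ≤ 32 * M ^ 4 := by
      calc (M + 1) ^ (2 * hdim A) ≤ (M + 1) ^ (2 : ℝ) :=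
            Real.rpow_le_rpow_of_exponent_le (by linarith) (by linarith)
        _ = (M + 1) ^ 2 := by norm_num
        _ ≤ 4 * M ^ 2 := by nlinarith
        _ ≤ 32 * M ^ 4 := by nlinarith [sq_nonneg (M ^ 2 - 1), mul_self_nonneg M]
    have h8 : 1 / (32 * M ^ 4) * x ^ (2 * hdim A) ≤ (x / (M + 1)) ^ (2 * hdim A) := by
      rw [Real.div_rpow hx0.le (by linarith), one_div_mul_eq_div]
      apply div_le_div_of_nonneg_left (by positivity) (by positivity) h7
    linarith
  · have : (0 : ℝ) ≤ (FF A (x / (4 * M ^ 2)) : ℝ) := Nat.cast_nonneg _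
    linarith
  · rw [hFB]
    have hB2 : ∀ w ∈ B, w ≠ [] ∧ ∀ d ∈ w, d ∈ A :=
      fun w hw => ⟨((hBmem w).1 hw).1, ((hBmem w).1 hw).2.1⟩
    obtain ⟨n, hn⟩ := pow_unbounded_of_one_lt x (show (1 : ℝ) < 2 by norm_num)
    have h1 := count_ss hA B hB2 hδ n x hx0 hn
    have h2 : ((B.filter (fun w => ¬ ss w ≤ x)).card : ℝ) ≤ (2 * x) ^ (2 * hdim A) := by
      apply antichain_card hA _ _ _ hδ0 (by linarith)
      · intro w hw
        have hw1 := (Finset.mem_filter.1 hw).1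
        have := ss_le (hBp w hw1)
        have := ((hBmem w).1 hw1).2.2
        linarith
      · intro w hw
        exact hB2 w (Finset.mem_filter.1 hw).1
      · rintro w hw v hv hne ⟨u, rfl⟩
        obtain ⟨hw1, hw2⟩ := Finset.mem_filter.1 hw
        obtain ⟨hv1, hv2⟩ := Finset.mem_filter.1 hv
        have hu : u ≠ [] := by rintro rfl; simp at hne
        have hup : Pos u := fun d hd => hBp _ hv1 d (List.mem_append_right _ hd)
        have := ss_le_qq_append (hBp w hw1) hup hu
        have := ((hBmem _).1 hv1).2.2
        exact hw2 (by linarith)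
    have h3 : (2 * x) ^ (2 * hdim A) ≤ 4 * x ^ (2 * hdim A) := by
      rw [Real.mul_rpow (by norm_num) hx0.le]
      apply mul_le_mul_of_nonneg_right _ (by positivity)
      calc (2 : ℝ) ^ (2 * hdim A) ≤ 2 ^ (2 : ℝ) :=
            Real.rpow_le_rpow_of_exponent_le (by norm_num) (by linarith)
        _ = 4 := by norm_num
    have h4 := Finset.card_filter_add_card_filter_not (s := B) (fun w => ss w ≤ x)
    have h4' : ((B.filter (fun w => ss w ≤ x)).card : ℝ) +
      (B.filter (fun w => ¬ ss w ≤ x)).card = B.card := by exact_mod_cast h4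
    linarith

end
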